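/- arXiv:1209.4508 — 3 statements merged into one kernel-verified Lean document; each statement's English description precedes it below -/
import Mathlib

section
/- Let f⁰, f¹, …, fᵗ be a b-decrement process on a nonnegative vector f⁰ ∈ ℝⁿ with b ≥ 1. Then every coordinate k with f⁰_k > (∑_{i=1}^n f⁰_i)/b satisfies fᵗ_k > 0. (Lemma 1 of the paper: b-heavy hitters survive the decrement process.) -/
/-!
The strict inequality `∑ i, f s i < b * f s k` is an invariant of the process
(`sum_lt_mul_of_decrement`): each step lowers the left side by at least `b Δ` and the right side
by at most `b Δ`. At the end the left side is still nonnegative, so `f t k > 0`.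
-/

/-- A `b`-decrement process of length `t` on vectors indexed by `Fin n`:
all coordinates stay nonnegative, and at each step `s < t` some set of at least `b`
coordinates is decreased by a common positive amount `Δ`, all other coordinates
staying unchanged. -/
def IsDecrementProcess {n : ℕ} (b t : ℕ) (f : ℕ → Fin n → ℝ) : Prop :=
  (∀ s ≤ t, ∀ i, 0 ≤ f s i) ∧
  ∀ s < t, ∃ Δ : ℝ, 0 < Δ ∧ ∃ D : Finset (Fin n), b ≤ D.card ∧
    (∀ i ∈ D, f (s + 1) i = f s i - Δ) ∧ (∀ i ∉ D, f (s + 1) i = f s i)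

/-- One step lowers the sum by `|D| Δ ≥ b Δ`, and `b` times any single coordinate by at most
`b Δ`. -/
lemma sum_lt_mul_of_decrement {n b : ℕ} {u v : Fin n → ℝ} {Δ : ℝ} (hΔ : 0 < Δ)
    {D : Finset (Fin n)} (hbD : b ≤ D.card) (hD : ∀ i ∈ D, v i = u i - Δ)
    (hDc : ∀ i ∉ D, v i = u i) {k : Fin n} (h : ∑ i, u i < b * u k) :
    ∑ i, v i < b * v k := by
  have hv : ∀ i, v i = u i - if i ∈ D then Δ else 0 := fun i => by
    by_cases hi : i ∈ D
    · simp [hi, hD i hi]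
    · simp [hi, hDc i hi]
  have hsum : ∑ i, v i = (∑ i, u i) - D.card * Δ := by
    simp [hv, Finset.sum_sub_distrib]
  have hvk : u k - Δ ≤ v k := by
    rw [hv k]
    split_ifs <;> linarith
  have hcard : (b : ℝ) * Δ ≤ D.card * Δ :=
    mul_le_mul_of_nonneg_right (by exact_mod_cast hbD) hΔ.le
  have hbk : (b : ℝ) * (u k - Δ) ≤ b * v k :=
    mul_le_mul_of_nonneg_left hvk (Nat.cast_nonneg b)
  linarith

/-- Lemma 1: every `b`-heavy hitter of the initial vector
survives the decrement process with strictly positive weight. -/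
theorem heavy_hitters_survive {n : ℕ} (b t : ℕ) (hb : 1 ≤ b)
    (f : ℕ → Fin n → ℝ) (hf : IsDecrementProcess b t f) (k : Fin n)
    (hk : (∑ i, f 0 i) / b < f 0 k) :
    0 < f t k := by
  have hb0 : (0 : ℝ) < b := by exact_mod_cast hb
  have key : ∀ s ≤ t, ∑ i, f s i < b * f s k := by
    intro s
    induction s with
    | zero => exact fun _ => (div_lt_iff₀' hb0).1 hk
    | succ s ih =>
      intro hs
      obtain ⟨Δ, hΔ, D, hbD, hD, hDc⟩ := hf.2 s hs
      exact sum_lt_mul_of_decrement hΔ hbD hD hDc (ih (Nat.le_of_succ_le hs))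
  have hnonneg : 0 ≤ ∑ i, f t i := Finset.sum_nonneg fun i _ => hf.1 t le_rfl i
  exact pos_of_mul_pos_right (hnonneg.trans_lt (key t le_rfl)) hb0.le
end

section
/- Let f⁰, f¹, …, fᵗ be a b-decrement process on a nonnegative vector f⁰ ∈ ℝⁿ with b ≥ 1, and let W = ∑_{i=1}^n f⁰_i. Then for every coordinate k, 0 ≤ f⁰_k − fᵗ_k ≤ W/b, i.e. the total decrease suffered by any single coordinate is at most W/b. (Mathematical core of Lemma 2: the summary underestimates each entry by at most ‖C‖_{E1}/b.) -/
theorem IsDecrementProcess.step {n b t : ℕ} {f : ℕ → Fin n → ℝ}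
    (hf : IsDecrementProcess b t f) {s : ℕ} (hs : s < t) (k : Fin n) :
    0 ≤ f s k - f (s + 1) k ∧
      b * (f s k - f (s + 1) k) ≤ ∑ i, f s i - ∑ i, f (s + 1) i := by
  obtain ⟨Δ, hΔ, D, hD, hin, hout⟩ := hf.2 s hs
  have hdrop : ∀ i, f s i - f (s + 1) i = if i ∈ D then Δ else 0 := by
    intro i
    split_ifs with h
    · rw [hin i h]; ring
    · rw [hout i h]; ring
  have htotal : ∑ i, f s i - ∑ i, f (s + 1) i = D.card * Δ := by
    rw [← Finset.sum_sub_distrib, Finset.sum_congr rfl fun i _ => hdrop i]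
    simp
  have hbD : (b : ℝ) * Δ ≤ D.card * Δ := by gcongr
  rw [htotal, hdrop k]
  split_ifs
  · exact ⟨hΔ.le, hbD⟩
  · exact ⟨le_rfl, by rw [mul_zero]; positivity⟩

theorem IsDecrementProcess.drop_le {n b t : ℕ} {f : ℕ → Fin n → ℝ}
    (hf : IsDecrementProcess b t f) (k : Fin n) {s : ℕ} (hs : s ≤ t) :
    0 ≤ f 0 k - f s k ∧ b * (f 0 k - f s k) ≤ ∑ i, f 0 i - ∑ i, f s i := by
  induction s with
  | zero => simp
  | succ s ih =>
    obtain ⟨h₁, h₂⟩ := ih (by omega)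
    obtain ⟨h₃, h₄⟩ := hf.step hs k
    exact ⟨by linarith, by linarith⟩

/-- core of Lemma 2: in a `b`-decrement process the total decrease
suffered by any single coordinate is between `0` and `W / b` where `W` is the total
initial weight. -/
theorem underestimate_le_div {n : ℕ} (b t : ℕ) (hb : 1 ≤ b)
    (f : ℕ → Fin n → ℝ) (hf : IsDecrementProcess b t f)
    (W : ℝ) (hW : W = ∑ i, f 0 i) (k : Fin n) :
    0 ≤ f 0 k - f t k ∧ f 0 k - f t k ≤ W / b := by
  obtain ⟨h₁, h₂⟩ := hf.drop_le k le_rfl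
  have hfinal : 0 ≤ ∑ i, f t i := Finset.sum_nonneg fun i _ => hf.1 t le_rfl i
  have hb' : (0 : ℝ) < b := by exact_mod_cast hb
  refine ⟨h₁, ?_⟩
  rw [le_div_iff₀' hb']
  linarith
end

section
/- Let b ≥ 2 and N ≥ 2 be integers, let S be a set of at most b natural numbers all smaller than N, and let P be a finite set of primes, each strictly greater than b, with |P| > (b − 1) · (log N / log b). Then for every i ∈ S there exists a prime p ∈ P such that i mod p ≠ j mod p for every j ∈ S with j ≠ i. (The isolation lemma underlying Theorem 2: each of at most b nonzero items is isolated in its own residue group for at least one prime of the family.) -/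
/-!
The argument is a union bound over the elements colliding with `i`. For `j ≠ i` below `N`, the
primes `p ∈ P` with `i ≡ j (mod p)` all divide the nonzero integer `|j - i| < N`, hence so does
their product. Each of them exceeds `b`, so there are at most `log N / log b` of them
(`card_collisions_le`). If every `p ∈ P` had a collision, `P` would be covered by the at most
`b - 1` collision sets of the elements `j ∈ S \ {i}`, contradicting the lower bound on `|P|`.
-/

/-- Two distinct naturals below `N` are congruent modulo at most `log_b N` of the primes in `P`. -/
lemma card_collisions_le {b N i j : ℕ} (hb : 2 ≤ b) (hi : i < N) (hj : j < N) (hij : j ≠ i)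
    (P : Finset ℕ) (hprime : ∀ p ∈ P, Nat.Prime p) (hgt : ∀ p ∈ P, b < p) :
    ((P.filter (fun p => i % p = j % p)).card : ℝ) ≤ Real.log N / Real.log b := by
  set T := P.filter (fun p => i % p = j % p) with hT
  have hdvd : ∏ p ∈ T, p ∣ ((j : ℤ) - i).natAbs := by
    refine Finset.prod_primes_dvd _ (fun p hp => ?_) (fun p hp => ?_)
    · exact (hprime p (Finset.mem_filter.1 hp).1).prime
    · exact Int.natCast_dvd.1 ((Nat.modEq_iff_dvd (n := p)).1 (Finset.mem_filter.1 hp).2)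
  have hpow : b ^ T.card ≤ N := calc
    b ^ T.card = ∏ _p ∈ T, b := by simp
    _ ≤ ∏ p ∈ T, p :=
      Finset.prod_le_prod' fun p hp => (hgt p (Finset.mem_filter.1 hp).1).le
    _ ≤ ((j : ℤ) - i).natAbs := Nat.le_of_dvd (by omega) hdvd
    _ ≤ N := by omega
  have hb1 : (1 : ℝ) < b := by exact_mod_cast hb
  rw [le_div_iff₀ (Real.log_pos hb1), ← Real.log_pow]
  exact Real.log_le_log (by positivity) (by exact_mod_cast hpow)

/-- isolation lemma underlying Theorem 2: given a set `S` of at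
most `b` natural numbers smaller than `N` and a set `P` of more than
`(b−1)·log N/log b` primes, each larger than `b`, every `i ∈ S` is isolated in its
residue class modulo some prime `p ∈ P`, i.e. no other `j ∈ S` has `j ≡ i (mod p)`. -/
theorem isolation_lemma (b N : ℕ) (hb : 2 ≤ b) (hN : 2 ≤ N)
    (S : Finset ℕ) (hScard : S.card ≤ b) (hSlt : ∀ i ∈ S, i < N)
    (P : Finset ℕ) (hprime : ∀ p ∈ P, Nat.Prime p) (hgt : ∀ p ∈ P, b < p)
    (hPcard : ((b : ℝ) - 1) * (Real.log N / Real.log b) < (P.card : ℝ)) :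
    ∀ i ∈ S, ∃ p ∈ P, ∀ j ∈ S, j ≠ i → i % p ≠ j % p := by
  intro i hi
  by_contra! h
  have hcover : P ⊆ (S.erase i).biUnion (fun j => P.filter (fun p => i % p = j % p)) := by
    intro p hp
    obtain ⟨j, hj, hji, hmod⟩ := h p hp
    exact Finset.mem_biUnion.2
      ⟨j, Finset.mem_erase.2 ⟨hji, hj⟩, Finset.mem_filter.2 ⟨hp, hmod⟩⟩
  have hsum : (P.card : ℝ) ≤
      ∑ j ∈ S.erase i, ((P.filter (fun p => i % p = j % p)).card : ℝ) := by
    exact_mod_cast (Finset.card_le_card hcover).trans Finset.card_biUnion_le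
  have hbound : (P.card : ℝ) ≤ ((S.erase i).card : ℝ) * (Real.log N / Real.log b) := by
    rw [← nsmul_eq_mul]
    refine hsum.trans (Finset.sum_le_card_nsmul _ _ _ fun j hj => ?_)
    obtain ⟨hji, hjS⟩ := Finset.mem_erase.1 hj
    exact card_collisions_le hb (hSlt i hi) (hSlt j hjS) hji P hprime hgt
  have hcard : ((S.erase i).card : ℝ) ≤ (b : ℝ) - 1 := by
    have h1 : (S.erase i).card + 1 ≤ b := by rwa [Finset.card_erase_add_one hi]
    have h2 : ((S.erase i).card : ℝ) + 1 ≤ b := by exact_mod_cast h1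
    linarith
  have hlog : 0 ≤ Real.log N / Real.log b :=
    div_nonneg (Real.log_natCast_nonneg N) (Real.log_natCast_nonneg b)
  exact absurd hPcard (not_lt.2 (hbound.trans (mul_le_mul_of_nonneg_right hcard hlog)))
end
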